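/- arXiv:1107.3900 — 4 statements merged into one kernel-verified Lean document; each statement's English description precedes it below -/
import Mathlib

section
/- Let R be a commutative ring which is a ℚ-algebra, let D : R → R be a derivation (an additive map satisfying D(xy) = D(x)y + xD(y)), let g ∈ R, and let n₁, n₂ be positive integers with n₂ ≤ n₁. Then for every natural number N with N ≤ 2n₂ − 1 there exist elements A, B ∈ R such that D^[N](g^{n₂}) · g^{n₁} = A · g^{n₁+1} + B · D(g^{n₁+1}), where D^[N] denotes the N-fold iterate of D. -/
theorem iter_add_aux {R : Type*} [CommRing R] (D : R → R)
    (hadd : ∀ x y : R, D (x + y) = D x + D y) (N : ℕ) :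
    ∀ x y : R, D^[N] (x + y) = D^[N] x + D^[N] y := by
  induction N with
  | zero => intro x y; rfl
  | succ N ih => intro x y; simp only [Function.iterate_succ_apply, hadd, ih]

/-- If `D^[k] x ∈ I` for `k < a` and `D^[k] y ∈ I` for `k < b`, then
`D^[N] (x * y) ∈ I` for `N < a + b`. -/
theorem iter_mul_mem_aux {R : Type*} [CommRing R] (D : R → R)
    (hadd : ∀ x y : R, D (x + y) = D x + D y)
    (hmul : ∀ x y : R, D (x * y) = D x * y + x * D y) (I : Ideal R) (N : ℕ) :
    ∀ (a b : ℕ) (x y : R), (∀ k < a, D^[k] x ∈ I) → (∀ k < b, D^[k] y ∈ I) →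
      N < a + b → D^[N] (x * y) ∈ I := by
  induction N with
  | zero =>
    intro a b x y hx hy h
    rcases Nat.eq_zero_or_pos a with ha | ha
    · exact I.mul_mem_left _ (hy 0 (by omega))
    · exact I.mul_mem_right _ (hx 0 ha)
  | succ N ih =>
    intro a b x y hx hy h
    rw [Function.iterate_succ_apply, hmul, iter_add_aux D hadd]
    refine I.add_mem (ih (a - 1) b _ _ (fun k hk => ?_) hy (by omega))
      (ih a (b - 1) _ _ hx (fun k hk => ?_) (by omega))
    · exact hx (k + 1) (by omega)
    · exact hy (k + 1) (by omega)

theorem iter_pow_mem_aux {R : Type*} [CommRing R] (D : R → R)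
    (hadd : ∀ x y : R, D (x + y) = D x + D y)
    (hmul : ∀ x y : R, D (x * y) = D x * y + x * D y) (g : R) (n : ℕ) :
    ∀ N < 2 * n, D^[N] (g ^ n) ∈ Ideal.span {g, D g} := by
  induction n with
  | zero => intro N h; omega
  | succ n ih =>
    intro N h
    rw [pow_succ]
    refine iter_mul_mem_aux D hadd hmul _ N (2 * n) 2 _ _ ih (fun k hk => ?_) (by omega)
    interval_cases k
    · exact Ideal.subset_span (by simp)
    · exact Ideal.subset_span (by simp)

/-- Let `R` be a commutative ring which is a `ℚ`-algebra, `D : R → R` a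
derivation (an additive map satisfying the Leibniz rule), `g ∈ R`, and `n₁, n₂` positive
integers with `n₂ ≤ n₁`.  Then for every `N ≤ 2 n₂ - 1` there exist `A B : R` with
`D^[N] (g ^ n₂) * g ^ n₁ = A * g ^ (n₁ + 1) + B * D (g ^ (n₁ + 1))`. -/
theorem quasiparticle_same_color_relation
    (R : Type*) [CommRing R] [Algebra ℚ R]
    (D : R → R)
    (hadd : ∀ x y : R, D (x + y) = D x + D y)
    (hmul : ∀ x y : R, D (x * y) = D x * y + x * D y)
    (g : R) (n₁ n₂ : ℕ) (hn₂ : 0 < n₂) (hle : n₂ ≤ n₁)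
    (N : ℕ) (hN : N ≤ 2 * n₂ - 1) :
    ∃ A B : R, D^[N] (g ^ n₂) * g ^ n₁ = A * g ^ (n₁ + 1) + B * D (g ^ (n₁ + 1)) := by
  have hpow : ∀ n : ℕ, D (g ^ (n + 1)) = ((n : R) + 1) * g ^ n * D g := by
    intro n
    induction n with
    | zero => simp
    | succ n ih => rw [pow_succ, hmul, ih]; push_cast; ring
  obtain ⟨a, b, hab⟩ := Ideal.mem_span_pair.1
    (iter_pow_mem_aux D hadd hmul g n₂ N (by omega))
  have hc : algebraMap ℚ R ((n₁ : ℚ) + 1)⁻¹ * ((n₁ : R) + 1) = 1 := by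
    have h : ((n₁ : R) + 1) = algebraMap ℚ R ((n₁ : ℚ) + 1) := by simp
    rw [h, ← map_mul, inv_mul_cancel₀ (by positivity), map_one]
  refine ⟨a, b * algebraMap ℚ R ((n₁ : ℚ) + 1)⁻¹, ?_⟩
  rw [hpow, ← hab]
  linear_combination (-(b * g ^ n₁ * D g)) * hc
end

section
/- Let R be a commutative ring, D : R → R a derivation (an additive map satisfying D(xy) = D(x)y + xD(y)), g ∈ R, and n a positive integer. Then for every natural number N with N ≤ 2n − 1, the element D^[N](g^n) lies in the ideal of R generated by g and D(g), where D^[N] denotes the N-fold iterate of D. -/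
/-- The weight filtration: `g` has weight two, `h` (playing the role of `D g`) weight one. -/
def weightIdeal {R : Type*} [CommRing R] (g h : R) (k : ℕ) : Ideal R :=
  Ideal.span {y | ∃ a b : ℕ, k ≤ 2 * a + b ∧ y = g ^ a * h ^ b}

theorem weightIdeal_gen {R : Type*} [CommRing R] (g h : R) (k a b : ℕ) (hk : k ≤ 2 * a + b) :
    g ^ a * h ^ b ∈ weightIdeal g h k :=
  Ideal.subset_span ⟨a, b, hk, rfl⟩

theorem deriv_pow_succ_aux {R : Type*} [CommRing R] (D : R → R)
    (hmul : ∀ x y : R, D (x * y) = D x * y + x * D y) (x : R) (n : ℕ) :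
    D (x ^ (n + 1)) = (n + 1) * x ^ n * D x := by
  induction n with
  | zero => simp
  | succ n ih => rw [pow_succ, hmul, ih]; push_cast; ring

theorem weightIdeal_deriv {R : Type*} [CommRing R] (D : R → R)
    (hadd : ∀ x y : R, D (x + y) = D x + D y)
    (hmul : ∀ x y : R, D (x * y) = D x * y + x * D y) (g : R) (k : ℕ) (x : R)
    (hx : x ∈ weightIdeal g (D g) (k + 1)) : D x ∈ weightIdeal g (D g) k := by
  have h0 : D 0 = 0 := by simpa using hadd 0 0
  have h1 : D 1 = 0 := by simpa using hmul 1 1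
  have hle : weightIdeal g (D g) (k + 1) ≤ weightIdeal g (D g) k :=
    Ideal.span_mono fun y ⟨a, b, h, e⟩ => ⟨a, b, by omega, e⟩
  unfold weightIdeal at hx
  induction hx using Submodule.span_induction with
  | zero => rw [h0]; exact zero_mem _
  | add x y _ _ hx hy => rw [hadd]; exact add_mem hx hy
  | smul r x hm hx =>
    rw [smul_eq_mul, hmul]
    exact add_mem (Ideal.mul_mem_left _ _ (hle hm)) (Ideal.mul_mem_left _ _ hx)
  | mem x hx =>
    obtain ⟨a, b, h, rfl⟩ := hx
    rw [hmul]
    apply add_mem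
    · cases a with
      | zero => simp [h1]
      | succ a =>
        rw [deriv_pow_succ_aux D hmul]
        have := Ideal.mul_mem_left _ ((a : R) + 1)
          (weightIdeal_gen g (D g) k a (b + 1) (by omega))
        convert this using 1
        ring
    · cases b with
      | zero => simp [h1]
      | succ b =>
        rw [deriv_pow_succ_aux D hmul]
        have := Ideal.mul_mem_left _ (((b : R) + 1) * D (D g))
          (weightIdeal_gen g (D g) k a b (by omega))
        convert this using 1
        ring

/-- If `D : R → R` is a derivation on a commutative ring `R`, `g ∈ R` and
`n` is a positive integer, then for every `N ≤ 2 n - 1` the element `D^[N] (g ^ n)` lies in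
the ideal generated by `g` and `D g`. -/
theorem iterated_derivative_pow_mem_ideal
    (R : Type*) [CommRing R]
    (D : R → R)
    (hadd : ∀ x y : R, D (x + y) = D x + D y)
    (hmul : ∀ x y : R, D (x * y) = D x * y + x * D y)
    (g : R) (n : ℕ) (hn : 0 < n)
    (N : ℕ) (hN : N ≤ 2 * n - 1) :
    D^[N] (g ^ n) ∈ Ideal.span ({g, D g} : Set R) := by
  have key : ∀ M k : ℕ, M + k ≤ 2 * n → D^[M] (g ^ n) ∈ weightIdeal g (D g) k := by
    intro M
    induction M with
    | zero =>
      intro k hk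
      simpa using weightIdeal_gen g (D g) k n 0 (by omega)
    | succ M ih =>
      intro k hk
      rw [Function.iterate_succ_apply']
      exact weightIdeal_deriv D hadd hmul g k _ (ih (k + 1) (by omega))
  have hle : weightIdeal g (D g) 1 ≤ Ideal.span ({g, D g} : Set R) := by
    refine Ideal.span_le.mpr ?_
    rintro y ⟨a, b, h, rfl⟩
    rcases Nat.eq_zero_or_pos a with ha | ha
    · exact Ideal.mul_mem_left _ _ (Ideal.pow_mem_of_mem _
        (Ideal.subset_span (by simp)) _ (by omega))
    · exact Ideal.mul_mem_right _ _ (Ideal.pow_mem_of_mem _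
        (Ideal.subset_span (by simp)) _ ha)
  exact hle (key N 1 (by omega))
end

section
/- Let R be a commutative ring, D : R → R a derivation (an additive map satisfying D(xy) = D(x)y + xD(y)), let g, h ∈ R, and let k be a positive integer such that g^i · h^j = 0 for all nonnegative integers i, j with i + j = k + 1. Let n₁, n₂ be positive integers with n₁ + n₂ ≥ k + 1. Then for every natural number N with N ≤ n₁ + n₂ − k − 1 one has D^[N](g^{n₂}) · h^{n₁} = 0, where D^[N] denotes the N-fold iterate of D. -/
/-- Let `D : R → R` be a derivation on a commutative ring `R`, let
`g h ∈ R` and let `k` be a positive integer such that `g ^ i * h ^ j = 0` whenever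
`i + j = k + 1`.  If `n₁, n₂` are positive with `n₁ + n₂ ≥ k + 1`, then for every
`N ≤ n₁ + n₂ - k - 1` one has `D^[N] (g ^ n₂) * h ^ n₁ = 0`. -/
theorem quasiparticle_different_color_relation
    (R : Type*) [CommRing R]
    (D : R → R)
    (hadd : ∀ x y : R, D (x + y) = D x + D y)
    (hmul : ∀ x y : R, D (x * y) = D x * y + x * D y)
    (g h : R) (k : ℕ) (hk : 0 < k)
    (hrel : ∀ i j : ℕ, i + j = k + 1 → g ^ i * h ^ j = 0)
    (n₁ n₂ : ℕ) (hn₁ : 0 < n₁) (hn₂ : 0 < n₂) (hsum : k + 1 ≤ n₁ + n₂)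
    (N : ℕ) (hN : N ≤ n₁ + n₂ - k - 1) :
    D^[N] (g ^ n₂) * h ^ n₁ = 0 := by
  have h1 : ∀ m : ℕ, g ^ m ∣ D (g ^ (m + 1)) := by
    intro m
    induction m with
    | zero => simp
    | succ m ih =>
      rw [pow_succ g (m + 1), hmul]
      refine dvd_add ?_ (Dvd.intro _ rfl)
      have e := mul_dvd_mul_right ih g
      rwa [← pow_succ g m] at e
  have h2 : ∀ (m : ℕ) (x : R), g ^ m ∣ x → g ^ (m - 1) ∣ D x := by
    intro m x hx
    cases m with
    | zero => simp
    | succ m =>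
      obtain ⟨c, rfl⟩ := hx
      rw [hmul]
      refine dvd_add (Dvd.dvd.mul_right (h1 m) c) (Dvd.dvd.mul_right ?_ _)
      exact pow_dvd_pow g (by omega)
  have h3 : ∀ M : ℕ, g ^ (n₂ - M) ∣ D^[M] (g ^ n₂) := by
    intro M
    induction M with
    | zero => simp
    | succ M ih =>
      rw [Function.iterate_succ_apply']
      exact h2 _ _ ih
  have h4 : g ^ (n₂ - N) * h ^ n₁ = 0 := by
    by_cases hc : k + 1 ≤ n₁
    · have e : h ^ (k + 1) = 0 := by simpa using hrel 0 (k + 1) (by omega)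
      rw [pow_eq_zero_of_le hc e, mul_zero]
    · have e := hrel (k + 1 - n₁) n₁ (by omega)
      obtain ⟨d, hd⟩ := pow_dvd_pow g (show k + 1 - n₁ ≤ n₂ - N by omega)
      rw [hd, mul_right_comm, e, zero_mul]
  obtain ⟨c, hc⟩ := h3 N
  rw [hc, mul_right_comm, h4, zero_mul]
end

section
/- Fix integers k ≥ 1 and k₀, k₁, k₂ ≥ 0 with k₀ + k₁ + k₂ = k and k₀·k₂ = 0, and set d₁(n) = −min(n, k₀) − 2·max(n − k₀, 0) and d₂(n) = −min(n, k₀+k₁) − 2·max(n − k₀ − k₁, 0). Call a quasi-particle datum a pair of non-increasing integer sequences k ≥ n_{1,1} ≥ ⋯ ≥ n_{1,a} ≥ 1 and k ≥ n_{2,1} ≥ ⋯ ≥ n_{2,b} ≥ 1 together with integers m_{1,1}, …, m_{1,a}, m_{2,1}, …, m_{2,b} satisfying: (i) m_{i,s+1} ≤ m_{i,s} − 2n_{i,s} whenever n_{i,s+1} = n_{i,s} (i = 1, 2); (ii) m_{1,s} ≤ d₁(n_{1,s}) − 2(s−1)·n_{1,s}; (iii) m_{2,s} ≤ d₂(n_{2,s})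 − 2(s−1)·n_{2,s} − ∑_{s'=1}^{a} max(0, n_{2,s} + n_{1,s'} − k); its charge is (∑_s n_{1,s}, ∑_s n_{2,s}) and its degree is −∑_s m_{1,s} − ∑_s m_{2,s}. Then for all nonnegative integers n₁, n₂, d, the number of quasi-particle data of charge (n₁, n₂) and degree d equals the sum, over all tuples of nonnegative integers (M_{i,c})_{i=1,2; c=1,…,k} with ∑_c c·M_{1,c} = n₁ and ∑_c c·M_{2,c} = n₂, of the number of 2k-tuples of partitions (λ^{(i,c)}) such that λ^{(i,c)} has at most M_{i,c} parts and ∑_{i,c} |λ^{(i,c)}| = d − E(M), where E(M) = ∑_{c,c'} min(c,c') M_{1,c} M_{1,c'} + ∑_{c,c'} max(0, c+c'−k) M_{1,c} M_{2,c'} + ∑_{c,c'} min(c,c') M_{2,c} M_{2,c'} + ∑_{c} max(0, c−k₀) M_{1,c} + ∑_{c} max(0, c−k₀−k₁) M_{2,c}. -/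
/-- Maximal degree `d_{max}(nγ₁, Λ) = -min(n,k₀) - 2·max(n-k₀,0)`. -/
def dmax1 (k₀ : ℕ) (n : ℕ) : ℤ :=
  -min (n : ℤ) (k₀ : ℤ) - 2 * max ((n : ℤ) - (k₀ : ℤ)) 0

/-- Maximal degree `d_{max}(nγ₂, Λ) = -min(n,k₀+k₁) - 2·max(n-k₀-k₁,0)`. -/
def dmax2 (k₀ k₁ : ℕ) (n : ℕ) : ℤ :=
  -min (n : ℤ) ((k₀ : ℤ) + (k₁ : ℤ)) - 2 * max ((n : ℤ) - (k₀ : ℤ) - (k₁ : ℤ)) 0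

/-- A quasi-particle datum: the charges and degrees of a quasi-particle basis monomial
of `𝔅_{W(Λ)}` for level `k` and `Λ` determined by `k₀, k₁` (and `k₂ = k - k₀ - k₁`). -/
structure QPDatum (k k₀ k₁ : ℕ) where
  a : ℕ
  b : ℕ
  n1 : Fin a → ℕ
  n2 : Fin b → ℕ
  m1 : Fin a → ℤ
  m2 : Fin b → ℤ
  n1_pos : ∀ s, 1 ≤ n1 s
  n1_le : ∀ s, n1 s ≤ k
  n1_anti : ∀ s t : Fin a, s ≤ t → n1 t ≤ n1 s
  n2_pos : ∀ s, 1 ≤ n2 s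
  n2_le : ∀ s, n2 s ≤ k
  n2_anti : ∀ s t : Fin b, s ≤ t → n2 t ≤ n2 s
  diff1 : ∀ (s : ℕ) (h : s + 1 < a), n1 ⟨s + 1, h⟩ = n1 ⟨s, Nat.lt_of_succ_lt h⟩ →
    m1 ⟨s + 1, h⟩ ≤ m1 ⟨s, Nat.lt_of_succ_lt h⟩ - 2 * (n1 ⟨s, Nat.lt_of_succ_lt h⟩ : ℤ)
  diff2 : ∀ (s : ℕ) (h : s + 1 < b), n2 ⟨s + 1, h⟩ = n2 ⟨s, Nat.lt_of_succ_lt h⟩ →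
    m2 ⟨s + 1, h⟩ ≤ m2 ⟨s, Nat.lt_of_succ_lt h⟩ - 2 * (n2 ⟨s, Nat.lt_of_succ_lt h⟩ : ℤ)
  init1 : ∀ s : Fin a, m1 s ≤ dmax1 k₀ (n1 s) - 2 * (s : ℕ) * (n1 s : ℤ)
  init2 : ∀ s : Fin b, m2 s ≤ dmax2 k₀ k₁ (n2 s) - 2 * (s : ℕ) * (n2 s : ℤ)
    - ∑ s' : Fin a, max 0 ((n2 s : ℤ) + (n1 s' : ℤ) - (k : ℤ))

/-- The charge of a quasi-particle datum: `(∑ n_{1,s}, ∑ n_{2,s})`. -/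
def QPDatum.charge {k k₀ k₁ : ℕ} (q : QPDatum k k₀ k₁) : ℕ × ℕ :=
  (∑ s : Fin q.a, q.n1 s, ∑ s : Fin q.b, q.n2 s)

/-- The degree of a quasi-particle datum: `-∑ m_{1,s} - ∑ m_{2,s}`. -/
def QPDatum.degree {k k₀ k₁ : ℕ} (q : QPDatum k k₀ k₁) : ℤ :=
  -(∑ s : Fin q.a, q.m1 s) - (∑ s : Fin q.b, q.m2 s)

/-- The exponent `E(M) = ᵗM Q^{(k)} M + L^{(k)}_Λ · M` of the fermionic formula, where
`M i j` is the number of quasi-particles of color `γ_{i+1}` and charge `j + 1`. -/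
def fermionicExponent (k k₀ k₁ : ℕ) (M : Fin 2 → Fin k → ℕ) : ℤ :=
  (∑ j : Fin k, ∑ j' : Fin k,
      ((min ((j : ℕ) + 1) ((j' : ℕ) + 1) : ℕ) : ℤ) * (M 0 j : ℤ) * (M 0 j' : ℤ))
  + (∑ j : Fin k, ∑ j' : Fin k,
      max 0 ((((j : ℕ) : ℤ) + 1) + (((j' : ℕ) : ℤ) + 1) - (k : ℤ))
        * (M 0 j : ℤ) * (M 1 j' : ℤ))
  + (∑ j : Fin k, ∑ j' : Fin k,
      ((min ((j : ℕ) + 1) ((j' : ℕ) + 1) : ℕ) : ℤ) * (M 1 j : ℤ) * (M 1 j' : ℤ))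
  + (∑ j : Fin k, max 0 ((((j : ℕ) : ℤ) + 1) - (k₀ : ℤ)) * (M 0 j : ℤ))
  + (∑ j : Fin k, max 0 ((((j : ℕ) : ℤ) + 1) - (k₀ : ℤ) - (k₁ : ℤ)) * (M 1 j : ℤ))

/-- One colour of a quasi-particle datum, with degree bound `g`. -/
structure QPCol (k : ℕ) (g : ℕ → ℤ) where
  a : ℕ
  n : Fin a → ℕ
  m : Fin a → ℤ
  n_pos : ∀ s, 1 ≤ n s
  n_le : ∀ s, n s ≤ k
  n_anti : ∀ s t : Fin a, s ≤ t → n t ≤ n s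
  diff : ∀ (s : ℕ) (h : s + 1 < a), n ⟨s + 1, h⟩ = n ⟨s, Nat.lt_of_succ_lt h⟩ →
    m ⟨s + 1, h⟩ ≤ m ⟨s, Nat.lt_of_succ_lt h⟩ - 2 * (n ⟨s, Nat.lt_of_succ_lt h⟩ : ℤ)
  upper : ∀ s : Fin a, m s ≤ g (n s) - 2 * (s : ℕ) * (n s : ℤ)

namespace QPCol

variable {k : ℕ} {g : ℕ → ℤ}

/-- The charge index. -/
def c (q : QPCol k g) (s : Fin q.a) : Fin k :=
  ⟨q.n s - 1, by have := q.n_pos s; have := q.n_le s; omega⟩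

/-- The excess. -/
def r (q : QPCol k g) (s : Fin q.a) : ℕ := (g (q.n s) - 2 * (s : ℕ) * (q.n s : ℤ) - q.m s).toNat

theorem n_eq (q : QPCol k g) (s : Fin q.a) : q.n s = (q.c s : ℕ) + 1 := by
  have := q.n_pos s
  simp only [c]; omega

theorem m_eq (q : QPCol k g) (s : Fin q.a) :
    q.m s = g (q.n s) - 2 * (s : ℕ) * (q.n s : ℤ) - q.r s := by
  have := q.upper s
  simp only [r]; omega

/-- The key in the linear order. -/
def key (q : QPCol k g) (s : Fin q.a) : (Fin k)ᵒᵈ ×ₗ ℕ := toLex (OrderDual.toDual (q.c s), q.r s)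

theorem key_mono (q : QPCol k g) : Monotone q.key := by
  have hm := q.m_eq
  have hn := q.n_eq
  have hd := q.diff
  have ha := q.n_anti
  have key : ∀ (s : ℕ) (h : s + 1 < q.a), q.key ⟨s, Nat.lt_of_succ_lt h⟩ ≤ q.key ⟨s+1, h⟩ := by
    intro s h
    rw [key, key, Prod.Lex.toLex_le_toLex]
    have h1 := ha ⟨s, Nat.lt_of_succ_lt h⟩ ⟨s+1, h⟩ (by simp)
    have h2 := hd s h
    have h3 := hm ⟨s, Nat.lt_of_succ_lt h⟩
    have h4 := hm ⟨s+1, h⟩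
    have h5 := hn ⟨s, Nat.lt_of_succ_lt h⟩
    have h6 := hn ⟨s+1, h⟩
    rcases h1.lt_or_eq with h7 | h7
    · left
      rw [OrderDual.toDual_lt_toDual, Fin.lt_def]; omega
    · right
      refine ⟨?_, ?_⟩
      · simp only [OrderDual.toDual_inj, Fin.ext_iff]; omega
      · have h2 := h2 h7
        simp only [h7] at h3 h4 h2
        push_cast at h4
        have : (q.r ⟨s, Nat.lt_of_succ_lt h⟩ : ℤ) ≤ q.r ⟨s+1, h⟩ := by linarith
        exact_mod_cast this
  intro s t hst
  obtain ⟨s, hs⟩ := s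
  obtain ⟨t, ht⟩ := t
  have hst : s ≤ t := hst
  induction t, hst using Nat.le_induction with
  | base => exact le_rfl
  | succ t h ih => exact (ih (by omega) h).trans (key t ht)

/-- The multiset of (charge index, excess). -/
def enc (q : QPCol k g) : Multiset (Fin k × ℕ) :=
  (Finset.univ : Finset (Fin q.a)).val.map fun s => (q.c s, q.r s)

theorem ofFn_unique {β : Type*} [LinearOrder β] {a b : ℕ} {f : Fin a → β} {f' : Fin b → β}
    (hf : Monotone f) (hf' : Monotone f')
    (h : (Finset.univ : Finset (Fin a)).val.map f = (Finset.univ : Finset (Fin b)).val.map f') :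
    (⟨a, f⟩ : Σ n, Fin n → β) = ⟨b, f'⟩ := by
  apply List.ofFn_inj'.1
  have h1 : (↑(List.ofFn f) : Multiset β) = ↑(List.ofFn f') := by
    simpa [Fin.univ_val_map] using h
  rw [Multiset.coe_eq_coe] at h1
  exact h1.eq_of_pairwise' hf.sortedLE_ofFn.pairwise hf'.sortedLE_ofFn.pairwise

theorem enc_injective : Function.Injective (enc (k := k) (g := g)) := by
  intro q q' h
  have hk : (Finset.univ : Finset (Fin q.a)).val.map q.key
      = (Finset.univ : Finset (Fin q'.a)).val.map q'.key := by
    have := congrArg (Multiset.map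
      (fun x : Fin k × ℕ => (toLex (OrderDual.toDual x.1, x.2) : (Fin k)ᵒᵈ ×ₗ ℕ))) h
    simp only [enc, Multiset.map_map] at this
    exact this
  have hs := ofFn_unique q.key_mono q'.key_mono hk
  have m1 := q.m_eq
  have m2 := q'.m_eq
  have n1 := q.n_eq
  have n2 := q'.n_eq
  generalize hK : q.key = K at hs
  generalize hK' : q'.key = K' at hs
  have hc : ∀ s, q.c s = OrderDual.ofDual (ofLex (K s)).1 := by intro s; rw [← hK]; rfl
  have hc' : ∀ s, q'.c s = OrderDual.ofDual (ofLex (K' s)).1 := by intro s; rw [← hK']; rfl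
  have hr : ∀ s, q.r s = (ofLex (K s)).2 := by intro s; rw [← hK]; rfl
  have hr' : ∀ s, q'.r s = (ofLex (K' s)).2 := by intro s; rw [← hK']; rfl
  simp only [hr, hc] at m1 n1
  simp only [hr', hc'] at m2 n2
  clear hr hr' hc hc' hK hK' hk h
  obtain ⟨a, n, m, _, _, _, _, _⟩ := q
  obtain ⟨a', n', m', _, _, _, _, _⟩ := q'
  simp only at *
  cases hs
  have : n = n' := by funext s; rw [n1, n2]
  subst this
  have : m = m' := by funext s; rw [m1, m2]
  subst this
  rfl

theorem enc_surjective : Function.Surjective (enc (k := k) (g := g)) := by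
  intro x
  let y : Multiset ((Fin k)ᵒᵈ ×ₗ ℕ) := x.map fun x => toLex (OrderDual.toDual x.1, x.2)
  let l := y.sort (· ≤ ·)
  have hl : l.Pairwise (· ≤ ·) := Multiset.pairwise_sort _ _
  have hmono : Monotone l.get := hl.sortedLE.monotone_get
  have hle : ∀ s t : Fin l.length, s ≤ t →
      (ofLex (l.get t)).1 ≥ (ofLex (l.get s)).1 ∧
      ((ofLex (l.get t)).1 = (ofLex (l.get s)).1 → (ofLex (l.get s)).2 ≤ (ofLex (l.get t)).2) := by
    intro s t hst
    have := hmono hst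
    rw [Prod.Lex.le_iff] at this
    rcases this with h | ⟨h, h'⟩
    · exact ⟨h.le, fun h2 => absurd h2 h.ne'⟩
    · exact ⟨h.le, fun _ => h'⟩
  let N : Fin l.length → ℕ := fun s => (OrderDual.ofDual (ofLex (l.get s)).1 : Fin k) + 1
  let q : QPCol k g :=
    { a := l.length
      n := N
      m := fun s => g (N s) - 2 * (s : ℕ) * (N s : ℤ) - ((ofLex (l.get s)).2 : ℕ)
      n_pos := fun s => by simp [N]
      n_le := fun s => (OrderDual.ofDual (ofLex (l.get s)).1 : Fin k).2
      n_anti := fun s t hst => by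
        have := (hle s t hst).1
        simpa [N] using this
      diff := fun s h e => by
        have := (hle ⟨s, Nat.lt_of_succ_lt h⟩ ⟨s+1, h⟩ (by simp)).2 (by
          apply OrderDual.ofDual.injective
          apply Fin.ext
          simpa [N] using e)
        rw [e]
        push_cast
        have : ((ofLex (l.get ⟨s, Nat.lt_of_succ_lt h⟩)).2 : ℤ) ≤ (ofLex (l.get ⟨s+1, h⟩)).2 := by
          exact_mod_cast this
        linarith
      upper := fun s => by
        have : (0:ℤ) ≤ ((ofLex (l.get s)).2 : ℕ) := by positivity
        linarith }
  refine ⟨q, ?_⟩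
  have hq : ∀ s, (q.c s, q.r s) = (fun z : (Fin k)ᵒᵈ ×ₗ ℕ =>
      ((OrderDual.ofDual (ofLex z).1 : Fin k), (ofLex z).2)) (l.get s) := by
    intro s
    apply Prod.ext
    · apply Fin.ext; simp [c, q, N]
    · simp [r, q]
  rw [enc, funext hq]
  rw [Fin.univ_val_map]
  change ((List.ofFn ((fun z : (Fin k)ᵒᵈ ×ₗ ℕ =>
      ((OrderDual.ofDual (ofLex z).1 : Fin k), (ofLex z).2)) ∘ l.get) : List _) : Multiset _) = x
  rw [← List.map_ofFn, List.ofFn_get, ← Multiset.map_coe, Multiset.sort_eq, Multiset.map_map]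
  exact Multiset.map_id x

theorem sum_min {a : ℕ} (n : Fin a → ℕ) (h : ∀ s t : Fin a, s ≤ t → n t ≤ n s) :
    ∑ s, ∑ t, ((min (n s) (n t) : ℕ) : ℤ) = ∑ s : Fin a, (2 * (s : ℕ) + 1) * (n s : ℤ) := by
  induction a with
  | zero => simp
  | succ a ih =>
    rw [Fin.sum_univ_castSucc, Fin.sum_univ_castSucc]
    simp only [Fin.sum_univ_castSucc (n := a)]
    have h1 : ∀ s : Fin a, min (n s.castSucc) (n (Fin.last a)) = n (Fin.last a) :=
      fun s => min_eq_right (h _ _ (Fin.le_last _))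
    have h2 : ∀ s : Fin a, min (n (Fin.last a)) (n s.castSucc) = n (Fin.last a) :=
      fun s => min_eq_left (h _ _ (Fin.le_last _))
    have := ih (fun s => n s.castSucc) (fun s t hst => h _ _ (by simpa using hst))
    simp only [h1, h2, Finset.sum_add_distrib, this, min_self]
    simp
    ring

/-- Multiplicities. -/
def mult (x : Multiset (Fin k × ℕ)) (j : Fin k) : ℕ := (x.filter (fun y => y.1 = j)).card

theorem map_sum_eq {R : Type*} [CommSemiring R] (x : Multiset (Fin k × ℕ)) (f : Fin k → R) :
    (x.map fun y => f y.1).sum = ∑ j, f j * (mult x j : R) := by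
  induction x using Multiset.induction with
  | empty => simp [mult]
  | cons y x ih =>
    simp only [Multiset.map_cons, Multiset.sum_cons, ih]
    have : ∀ j, (mult (y ::ₘ x) j : R) = (if y.1 = j then 1 else 0) + mult x j := by
      intro j
      by_cases h : y.1 = j <;> simp [mult, h, add_comm]
    simp [this, mul_add, Finset.sum_add_distrib]

theorem sum_eq {R : Type*} [CommSemiring R] (q : QPCol k g) (f : ℕ → R) :
    ∑ s, f (q.n s) = ∑ j : Fin k, f ((j : ℕ) + 1) * (mult q.enc j : R) := by
  rw [← map_sum_eq q.enc (fun j => f ((j : ℕ) + 1)), enc, Multiset.map_map]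
  simp only [Function.comp_def, ← n_eq]
  rfl

theorem degree_eq (q : QPCol k g) :
    -∑ s, q.m s = ((q.enc.map fun y => y.2).sum : ℕ)
      + (∑ j : Fin k, ∑ j' : Fin k, ((min ((j : ℕ) + 1) ((j' : ℕ) + 1) : ℕ) : ℤ)
          * (mult q.enc j : ℤ) * (mult q.enc j' : ℤ))
      + ∑ j : Fin k, (-g ((j : ℕ) + 1) - ((j : ℕ) + 1 : ℕ)) * (mult q.enc j : ℤ) := by
  have h1 : ((q.enc.map fun y => y.2).sum : ℕ) = ∑ s, q.r s := by
    rw [enc, Multiset.map_map]; rfl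
  have h2 := q.sum_eq (fun n => -g n - (n : ℤ))
  have h3 := sum_min q.n q.n_anti
  have h4 : ∑ s, ∑ t, ((min (q.n s) (q.n t) : ℕ) : ℤ) =
     (∑ j : Fin k, ∑ j' : Fin k, ((min ((j : ℕ) + 1) ((j' : ℕ) + 1) : ℕ) : ℤ)
          * (mult q.enc j : ℤ) * (mult q.enc j' : ℤ)) := by
    have e1 : ∀ s, ∑ t, ((min (q.n s) (q.n t) : ℕ) : ℤ) = _ :=
      fun s => q.sum_eq (fun t => ((min (q.n s) t : ℕ) : ℤ))
    simp only [e1]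
    rw [q.sum_eq (fun s => ∑ j : Fin k, ((min s (j + 1) : ℕ) : ℤ) * (mult q.enc j : ℤ))]
    simp only [Finset.sum_mul]
    refine Finset.sum_congr rfl fun j _ => Finset.sum_congr rfl fun j' _ => ?_
    ring
  rw [← h4, h3, ← h2, h1]
  push_cast
  rw [← Finset.sum_neg_distrib, ← Finset.sum_add_distrib, ← Finset.sum_add_distrib]
  refine Finset.sum_congr rfl fun s _ => ?_
  rw [q.m_eq s]
  ring

/-- Fibre over a charge. -/
def part (x : Multiset (Fin k × ℕ)) (j : Fin k) : Multiset ℕ :=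
  (x.filter (fun y => y.1 = j)).map Prod.snd

theorem card_part (x : Multiset (Fin k × ℕ)) (j : Fin k) : (part x j).card = mult x j := by
  simp [part, mult]

theorem sum_part (x : Multiset (Fin k × ℕ)) :
    ∑ j, (part x j).sum = (x.map fun y => y.2).sum := by
  induction x using Multiset.induction with
  | empty => simp [part]
  | cons y x ih =>
    have : ∀ j, (part (y ::ₘ x) j).sum = (if y.1 = j then y.2 else 0) + (part x j).sum := by
      intro j
      by_cases h : y.1 = j <;> simp [part, h]
    simp [this, Finset.sum_add_distrib, ih]

theorem sum_fibres (x : Multiset (Fin k × ℕ)) :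
    ∑ j, (part x j).map (fun r => (j, r)) = x := by
  induction x using Multiset.induction with
  | empty => simp [part]
  | cons y x ih =>
    have : ∀ j, (part (y ::ₘ x) j).map (fun r => (j, r))
        = (if y.1 = j then {y} else 0) + (part x j).map (fun r => (j, r)) := by
      intro j
      by_cases h : y.1 = j
      · subst h; simp [part]
      · simp [part, h]
    simp [this, Finset.sum_add_distrib, ih]

theorem part_fibres (f : Fin k → Multiset ℕ) (j : Fin k) :
    part (∑ i, (f i).map (fun r => (i, r))) j = f j := by
  have h : ∀ S : Finset (Fin k), part (∑ i ∈ S, (f i).map (fun r => (i, r))) j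
      = ∑ i ∈ S, if i = j then f i else 0 := by
    intro S
    induction S using Finset.induction_on with
    | empty => simp [part]
    | insert i S hi ih =>
      rw [Finset.sum_insert hi, Finset.sum_insert hi, ← ih]
      simp only [part, Multiset.filter_add, Multiset.map_add]
      congr 1
      by_cases h : i = j
      · simp [h, Multiset.filter_map]
      · simp [h, Multiset.filter_map]
  rw [h]; simp

theorem filter_pos_add (s : Multiset ℕ) :
    s.filter (0 < ·) + Multiset.replicate (s.card - (s.filter (0 < ·)).card) 0 = s := by
  have h := Multiset.filter_add_not (0 < ·) s
  have h2 : s.filter (fun x => ¬ 0 < x)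
      = Multiset.replicate (s.filter (fun x => ¬ 0 < x)).card 0 := by
    rw [Multiset.eq_replicate_card]
    intro b hb
    have := (Multiset.mem_filter.1 hb).2
    omega
  have h3 := congrArg Multiset.card h
  rw [Multiset.card_add] at h3
  have h4 : s.card - (s.filter (0 < ·)).card = (s.filter (fun x => ¬ 0 < x)).card := by omega
  rw [h4, ← h2, h]

theorem sum_filter_pos (s : Multiset ℕ) : (s.filter (0 < ·)).sum = s.sum := by
  conv_rhs => rw [← filter_pos_add s]
  simp

end QPCol

namespace QPDatum

variable {k k₀ k₁ : ℕ}

/-- bound for second colour -/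
def bound2 (k k₀ k₁ : ℕ) {a : ℕ} (n1 : Fin a → ℕ) (n : ℕ) : ℤ :=
  dmax2 k₀ k₁ n - ∑ s' : Fin a, max 0 ((n : ℤ) + (n1 s' : ℤ) - (k : ℤ))

/-- First colour. -/
def col1 (q : QPDatum k k₀ k₁) : QPCol k (dmax1 k₀) :=
  ⟨q.a, q.n1, q.m1, q.n1_pos, q.n1_le, q.n1_anti, q.diff1, q.init1⟩

/-- Second colour. -/
def col2 (q : QPDatum k k₀ k₁) : QPCol k (bound2 k k₀ k₁ q.n1) :=
  ⟨q.b, q.n2, q.m2, q.n2_pos, q.n2_le, q.n2_anti, q.diff2, fun s => by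
    have := q.init2 s
    simp only [bound2]; linarith⟩

/-- Both encodings. -/
def enc (q : QPDatum k k₀ k₁) : Fin 2 → Multiset (Fin k × ℕ) := ![q.col1.enc, q.col2.enc]

theorem enc_injective : Function.Injective (enc (k := k) (k₀ := k₀) (k₁ := k₁)) := by
  intro q q' h
  have h1 : q.col1.enc = q'.col1.enc := congrFun h 0
  have h2 : q.col2.enc = q'.col2.enc := congrFun h 1
  have h1 := QPCol.enc_injective h1
  obtain ⟨a, b, n1, n2, m1, m2, _, _, _, _, _, _, _, _, _, _⟩ := q
  obtain ⟨a', b', n1', n2', m1', m2', _, _, _, _, _, _, _, _, _, _⟩ := q'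
  simp only [col1, QPCol.mk.injEq] at h1
  obtain ⟨rfl, h3, h4⟩ := h1
  cases h3
  cases h4
  have h2 := QPCol.enc_injective h2
  simp only [col2, QPCol.mk.injEq] at h2
  obtain ⟨rfl, h3, h4⟩ := h2
  cases h3
  cases h4
  rfl

theorem enc_surjective : Function.Surjective (enc (k := k) (k₀ := k₀) (k₁ := k₁)) := by
  intro x
  obtain ⟨c1, h1⟩ := QPCol.enc_surjective (g := dmax1 k₀) (x 0)
  obtain ⟨c2, h2⟩ := QPCol.enc_surjective (g := bound2 k k₀ k₁ c1.n) (x 1)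
  refine ⟨⟨c1.a, c2.a, c1.n, c2.n, c1.m, c2.m, c1.n_pos, c1.n_le, c1.n_anti, c2.n_pos, c2.n_le,
    c2.n_anti, c1.diff, c2.diff, c1.upper, fun s => ?_⟩, ?_⟩
  · have := c2.upper s
    simp only [bound2] at this; linarith
  · funext i
    fin_cases i
    · exact h1
    · exact h2

theorem charge_eq (q : QPDatum k k₀ k₁) : q.charge =
    (∑ j : Fin k, ((j : ℕ) + 1) * QPCol.mult (q.enc 0) j,
     ∑ j : Fin k, ((j : ℕ) + 1) * QPCol.mult (q.enc 1) j) := by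
  have h1 := q.col1.sum_eq (fun n => n)
  have h2 := q.col2.sum_eq (fun n => n)
  exact Prod.ext h1 h2

theorem degree_eq (q : QPDatum k k₀ k₁) : q.degree =
    (∑ i : Fin 2, ∑ j : Fin k, ((QPCol.part (q.enc i) j).sum : ℤ))
      + fermionicExponent k k₀ k₁ (fun i j => QPCol.mult (q.enc i) j) := by
  have h1 := q.col1.degree_eq
  have h2 := q.col2.degree_eq
  have p1 := QPCol.sum_part q.col1.enc
  have p2 := QPCol.sum_part q.col2.enc
  have hd : q.degree = -∑ s, q.col1.m s + -∑ s, q.col2.m s := by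
    rw [QPDatum.degree, sub_eq_add_neg]; rfl
  have e0 : q.enc 0 = q.col1.enc := rfl
  have e1 : q.enc 1 = q.col2.enc := rfl
  rw [hd, h1, h2, ← p1, ← p2, Fin.sum_univ_two, fermionicExponent]
  simp only [e0, e1]
  have a1 : ∀ j : Fin k, -dmax1 k₀ ((j : ℕ) + 1) - (((j : ℕ) + 1 : ℕ) : ℤ)
      = max 0 ((((j : ℕ) : ℤ) + 1) - (k₀ : ℤ)) := by
    intro j; simp only [dmax1]; push_cast; omega
  have a2 : ∀ j : Fin k, -dmax2 k₀ k₁ ((j : ℕ) + 1) - (((j : ℕ) + 1 : ℕ) : ℤ)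
      = max 0 ((((j : ℕ) : ℤ) + 1) - (k₀ : ℤ) - (k₁ : ℤ)) := by
    intro j; simp only [dmax2]; push_cast; omega
  have a3 : ∀ n : ℕ, ∑ s' : Fin q.a, max 0 ((n : ℤ) + (q.n1 s' : ℤ) - (k : ℤ))
      = ∑ j : Fin k, max 0 ((n : ℤ) + (((j : ℕ) : ℤ) + 1) - (k : ℤ))
        * (QPCol.mult q.col1.enc j : ℤ) := by
    intro n
    have := q.col1.sum_eq (fun t => max 0 ((n : ℤ) + (t : ℤ) - (k : ℤ)))
    push_cast at this
    exact this
  have a4 : ∀ j : Fin k, -bound2 k k₀ k₁ q.n1 ((j : ℕ) + 1) - (((j : ℕ) + 1 : ℕ) : ℤ)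
      = max 0 ((((j : ℕ) : ℤ) + 1) - (k₀ : ℤ) - (k₁ : ℤ))
       + ∑ j' : Fin k, max 0 ((((j' : ℕ) : ℤ) + 1) + (((j : ℕ) : ℤ) + 1) - (k : ℤ))
        * (QPCol.mult q.col1.enc j' : ℤ) := by
    intro j
    rw [← a2, bound2, a3]
    push_cast
    simp only [add_comm (((j : ℕ) : ℤ) + 1)]
    ring
  simp only [a1, a4, add_mul, Finset.sum_add_distrib, Finset.sum_mul]
  rw [Finset.sum_comm (f := fun j j' : Fin k =>
    max 0 ((((j' : ℕ) : ℤ) + 1) + (((j : ℕ) : ℤ) + 1) - (k : ℤ))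
        * (QPCol.mult q.col1.enc j' : ℤ) * (QPCol.mult q.col2.enc j : ℤ))]
  push_cast
  ring

/-- The fermionic data of a datum. -/
def ferm (q : QPDatum k k₀ k₁) : (Fin 2 → Fin k → ℕ) × (Fin 2 → Fin k → Multiset ℕ) :=
  (fun i j => QPCol.mult (q.enc i) j, fun i j => (QPCol.part (q.enc i) j).filter (0 < ·))

theorem ferm_injective : Function.Injective (ferm (k := k) (k₀ := k₀) (k₁ := k₁)) := by
  intro q q' h
  apply enc_injective
  funext i
  rw [← QPCol.sum_fibres (q.enc i), ← QPCol.sum_fibres (q'.enc i)]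
  refine Finset.sum_congr rfl fun j _ => ?_
  have h1 : QPCol.mult (q.enc i) j = QPCol.mult (q'.enc i) j :=
    congrFun (congrFun (congrArg Prod.fst h) i) j
  have h2 : (QPCol.part (q.enc i) j).filter (0 < ·) = (QPCol.part (q'.enc i) j).filter (0 < ·) :=
    congrFun (congrFun (congrArg Prod.snd h) i) j
  rw [← QPCol.filter_pos_add (QPCol.part (q.enc i) j),
    ← QPCol.filter_pos_add (QPCol.part (q'.enc i) j), QPCol.card_part, QPCol.card_part, h1, h2]

theorem ferm_surjective (MP : (Fin 2 → Fin k → ℕ) × (Fin 2 → Fin k → Multiset ℕ))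
    (h1 : ∀ i j, ∀ x ∈ MP.2 i j, 0 < x) (h2 : ∀ i j, Multiset.card (MP.2 i j) ≤ MP.1 i j) :
    ∃ q : QPDatum k k₀ k₁, q.ferm = MP := by
  obtain ⟨q, hq⟩ := enc_surjective (k := k) (k₀ := k₀) (k₁ := k₁) (fun i =>
    ∑ j, (MP.2 i j + Multiset.replicate (MP.1 i j - (MP.2 i j).card) 0).map (fun r => (j, r)))
  have hp : ∀ i j, QPCol.part (q.enc i) j
      = MP.2 i j + Multiset.replicate (MP.1 i j - (MP.2 i j).card) 0 := by
    intro i j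
    rw [hq]
    exact QPCol.part_fibres
      (fun j => MP.2 i j + Multiset.replicate (MP.1 i j - (MP.2 i j).card) 0) j
  refine ⟨q, Prod.ext ?_ ?_⟩
  · funext i j
    have := h2 i j
    simp only [ferm]
    rw [← QPCol.card_part, hp]
    simp; omega
  · funext i j
    simp only [ferm]
    rw [hp, Multiset.filter_add, Multiset.filter_eq_self.2 (h1 i j)]
    rw [Multiset.filter_eq_nil.2]
    · simp
    · intro a ha
      simp [Multiset.eq_of_mem_replicate ha]

end QPDatum

/-- The fermionic formula for quasi-particle data: the number of
quasi-particle data of charge `(n₁, n₂)` and degree `d` equals the sum over charge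
contents `M` of the number of `2k`-tuples of partitions of total size `d - E(M)` with
`λ^{(i,c)}` having at most `M_{i,c}` parts. -/
theorem count_quasiparticle_data_fermionic
    (k k₀ k₁ k₂ : ℕ) (hk : 1 ≤ k) (hsum : k₀ + k₁ + k₂ = k) (hmin : k₀ * k₂ = 0)
    (n₁ n₂ d : ℕ) :
    Nat.card {q : QPDatum k k₀ k₁ // q.charge = (n₁, n₂) ∧ q.degree = (d : ℤ)}
    = Nat.card {MP : (Fin 2 → Fin k → ℕ) × (Fin 2 → Fin k → Multiset ℕ) //
        (∑ j : Fin k, ((j : ℕ) + 1) * MP.1 0 j = n₁) ∧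
        (∑ j : Fin k, ((j : ℕ) + 1) * MP.1 1 j = n₂) ∧
        (∀ i j, ∀ x ∈ MP.2 i j, 0 < x) ∧
        (∀ i j, Multiset.card (MP.2 i j) ≤ MP.1 i j) ∧
        (∑ i : Fin 2, ∑ j : Fin k, ((MP.2 i j).sum : ℤ))
          = (d : ℤ) - fermionicExponent k k₀ k₁ MP.1} := by
  have key : ∀ q : QPDatum k k₀ k₁, (q.charge = (n₁, n₂) ∧ q.degree = (d : ℤ)) ↔
      ((∑ j : Fin k, ((j : ℕ) + 1) * q.ferm.1 0 j = n₁) ∧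
        (∑ j : Fin k, ((j : ℕ) + 1) * q.ferm.1 1 j = n₂) ∧
        (∀ i j, ∀ x ∈ q.ferm.2 i j, 0 < x) ∧
        (∀ i j, Multiset.card (q.ferm.2 i j) ≤ q.ferm.1 i j) ∧
        (∑ i : Fin 2, ∑ j : Fin k, ((q.ferm.2 i j).sum : ℤ))
          = (d : ℤ) - fermionicExponent k k₀ k₁ q.ferm.1) := by
    intro q
    have hpos : ∀ i j, ∀ x ∈ q.ferm.2 i j, 0 < x := fun i j x hx => (Multiset.mem_filter.1 hx).2
    have hcard : ∀ i j, Multiset.card (q.ferm.2 i j) ≤ q.ferm.1 i j := by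
      intro i j
      simp only [QPDatum.ferm]
      rw [← QPCol.card_part]
      exact Multiset.card_le_card (Multiset.filter_le _ _)
    have hs : (∑ i : Fin 2, ∑ j : Fin k, ((q.ferm.2 i j).sum : ℤ))
        = ∑ i : Fin 2, ∑ j : Fin k, ((QPCol.part (q.enc i) j).sum : ℤ) := by
      simp only [QPDatum.ferm, QPCol.sum_filter_pos]
    rw [hs, eq_sub_iff_add_eq, q.charge_eq, q.degree_eq, Prod.mk.injEq]
    constructor
    · rintro ⟨⟨a1, a2⟩, a3⟩
      exact ⟨a1, a2, hpos, hcard, a3⟩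
    · rintro ⟨a1, a2, -, -, a3⟩
      exact ⟨⟨a1, a2⟩, a3⟩
  refine Nat.card_eq_of_bijective (fun q => ⟨q.1.ferm, (key q.1).1 q.2⟩) ⟨?_, ?_⟩
  · intro q q' h
    exact Subtype.ext (QPDatum.ferm_injective (congrArg Subtype.val h))
  · rintro ⟨MP, h⟩
    obtain ⟨q, rfl⟩ := QPDatum.ferm_surjective (k₀ := k₀) (k₁ := k₁) MP h.2.2.1 h.2.2.2.1
    exact ⟨⟨q, (key q).2 h⟩, rfl⟩
end
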